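/- Let G be a finite simple graph with vertex set {1, …, N} (N ≥ 1) and edge set E. For each vertex i, let X_i denote the N-qubit Pauli string with X in the i-th tensor factor and I elsewhere, and for each edge {i,j} ∈ E let Z_iZ_j denote the N-qubit Pauli string with Z in the i-th and j-th tensor factors and I elsewhere. Then there exists an N-qubit Pauli string V that anticommutes with X_i for every vertex i and anticommutes with Z_iZ_j for every edge {i,j} ∈ E if and only if G is bipartite (i.e. G contains no odd cycle). -/

import Mathlib

/-!
Two Pauli matrices commute up to a sign, so two Pauli strings `s`, `t` satisfy
`P s * P t = ε • (P t * P s)`, where `ε` is the product of the tensor-factor signs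
(`pauliString_mul_comm`). Since a Pauli string squares to the identity, `P t * P s ≠ 0`, and hence
anticommutation is equivalent to `ε = -1` (`pauliString_anticomm_iff`). Anticommuting with every
`X_i` therefore means that every factor of `V` is `Y` or `Z`; anticommuting with `Z_i Z_j` then
means that exactly one of the factors `i`, `j` is `Y`. Such a string is precisely a proper
2-colouring of the graph by the colours `Y` and `Z`.
-/

open Matrix Complex

/-- The four single-qubit Pauli matrices `I, X, Y, Z`, indexed by `Fin 4`. -/
noncomputable def pauli1 : Fin 4 → Matrix (Fin 2) (Fin 2) ℂ
  | 0 => 1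
  | 1 => !![0, 1; 1, 0]
  | 2 => !![0, -Complex.I; Complex.I, 0]
  | 3 => !![1, 0; 0, -1]

/-- The `N`-qubit Pauli string `σ_{s 0} ⊗ ⋯ ⊗ σ_{s (N-1)}`, realized as a matrix indexed by
`Fin N → Fin 2` (entrywise description of the iterated Kronecker product). -/
noncomputable def PauliString (N : ℕ) (s : Fin N → Fin 4) :
    Matrix (Fin N → Fin 2) (Fin N → Fin 2) ℂ :=
  Matrix.of fun r c => ∏ i, pauli1 (s i) (r i) (c i)

/-- The sign with which two single-qubit Pauli matrices commute: `1` when one of them is the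
identity or they are equal, `-1` otherwise. -/
def pauliSign (a b : Fin 4) : ℤ := if a = 0 ∨ b = 0 ∨ a = b then 1 else -1

theorem pauli1_mul_comm (a b : Fin 4) :
    pauli1 a * pauli1 b = (pauliSign a b : ℂ) • (pauli1 b * pauli1 a) := by
  fin_cases a <;> fin_cases b <;> ext i j <;> fin_cases i <;> fin_cases j <;>
    simp [pauli1, pauliSign]

theorem pauli1_mul_self (a : Fin 4) : pauli1 a * pauli1 a = 1 := by
  fin_cases a <;> ext i j <;> fin_cases i <;> fin_cases j <;> simp [pauli1]

/-- The mixed-product property: Pauli strings multiply factor by factor. -/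
theorem pauliString_mul_apply {N : ℕ} (s t : Fin N → Fin 4) (r c : Fin N → Fin 2) :
    (PauliString N s * PauliString N t) r c = ∏ i, (pauli1 (s i) * pauli1 (t i)) (r i) (c i) := by
  simp only [PauliString, Matrix.mul_apply, Matrix.of_apply, ← Finset.prod_mul_distrib]
  rw [Finset.prod_univ_sum, Fintype.piFinset_univ]

theorem pauliString_mul_self {N : ℕ} (s : Fin N → Fin 4) :
    PauliString N s * PauliString N s = 1 := by
  ext r c
  simp only [pauliString_mul_apply, pauli1_mul_self, Matrix.one_apply]
  rw [Finset.prod_ite_zero]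
  simp [funext_iff]

theorem pauliString_mul_comm {N : ℕ} (s t : Fin N → Fin 4) :
    PauliString N s * PauliString N t =
      ((∏ i, pauliSign (s i) (t i) : ℤ) : ℂ) • (PauliString N t * PauliString N s) := by
  ext r c
  rw [Matrix.smul_apply, pauliString_mul_apply, pauliString_mul_apply, Int.cast_prod, smul_eq_mul,
    ← Finset.prod_mul_distrib]
  refine Finset.prod_congr rfl fun i _ => ?_
  rw [pauli1_mul_comm, Matrix.smul_apply, smul_eq_mul]

theorem pauliString_mul_ne_zero {N : ℕ} (s t : Fin N → Fin 4) :
    PauliString N t * PauliString N s ≠ 0 := by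
  intro h
  have h1 : PauliString N t * (PauliString N t * PauliString N s) * PauliString N s = 1 := by
    rw [← mul_assoc, pauliString_mul_self, one_mul, pauliString_mul_self]
  rw [h, mul_zero, zero_mul] at h1
  exact zero_ne_one h1

theorem pauliString_anticomm_iff {N : ℕ} (s t : Fin N → Fin 4) :
    PauliString N s * PauliString N t = -(PauliString N t * PauliString N s) ↔
      ∏ i, pauliSign (s i) (t i) = -1 := by
  rw [pauliString_mul_comm s t, ← neg_one_smul ℂ (PauliString N t * PauliString N s)]
  constructor
  · intro h
    exact_mod_cast smul_left_injective ℂ (pauliString_mul_ne_zero s t) h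
  · intro h
    rw [h]
    simp

theorem pauliSign_zero (a : Fin 4) : pauliSign a 0 = 1 := by simp [pauliSign]

theorem prod_pauliSign_single {N : ℕ} (v : Fin N → Fin 4) (i : Fin N) :
    ∏ j, pauliSign (v j) (if j = i then 1 else 0) = pauliSign (v i) 1 := by
  rw [Fintype.prod_eq_single i fun j hj => by rw [if_neg hj, pauliSign_zero], if_pos rfl]

theorem prod_pauliSign_pair {N : ℕ} (v : Fin N → Fin 4) {i j : Fin N} (hij : i ≠ j) :
    ∏ k, pauliSign (v k) (if k = i ∨ k = j then 3 else 0) =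
      pauliSign (v i) 3 * pauliSign (v j) 3 := by
  rw [Fintype.prod_eq_mul i j hij fun k hk => by
    rw [if_neg (not_or.mpr hk), pauliSign_zero], if_pos (Or.inl rfl), if_pos (Or.inr rfl)]

/-- **Ising models invertible in one query are exactly the bipartite ones.** For a finite
simple graph `G` on `N ≥ 1` vertices, there exists an `N`-qubit Pauli string `V`
anticommuting with `X_i` for every vertex `i` and with `Z_i Z_j` for every edge `{i,j}`
iff `G` is bipartite (2-colorable, i.e. has no odd cycle). Here `X_i` has `X` in the `i`-th
tensor factor and `I` elsewhere, and `Z_i Z_j` has `Z` in the `i`-th and `j`-th tensor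
factors and `I` elsewhere (encoding `0=I, 1=X, 2=Y, 3=Z`). -/
theorem ising_single_query_inverse_iff_bipartite {N : ℕ} (hN : 1 ≤ N)
    (G : SimpleGraph (Fin N)) :
    (∃ v : Fin N → Fin 4,
        (∀ i : Fin N,
          PauliString N v * PauliString N (fun j => if j = i then 1 else 0)
            = -(PauliString N (fun j => if j = i then 1 else 0) * PauliString N v)) ∧
        (∀ i j : Fin N, G.Adj i j →
          PauliString N v * PauliString N (fun k => if k = i ∨ k = j then 3 else 0)
            = -(PauliString N (fun k => if k = i ∨ k = j then 3 else 0) *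
                PauliString N v))) ↔
      G.Colorable 2 := by
  simp only [pauliString_anticomm_iff, prod_pauliSign_single]
  constructor
  · rintro ⟨v, hX, hZ⟩
    -- The colour records whether the tensor factor is `Y`.
    refine ⟨SimpleGraph.Coloring.mk (fun i => if v i = 2 then (0 : Fin 2) else 1) ?_⟩
    intro i j hij
    have key : ∀ a b : Fin 4, pauliSign a 1 = -1 → pauliSign b 1 = -1 →
        pauliSign a 3 * pauliSign b 3 = -1 →
        (if a = 2 then (0 : Fin 2) else 1) ≠ if b = 2 then 0 else 1 := by decide
    exact key _ _ (hX i) (hX j) (by rw [← prod_pauliSign_pair v hij.ne]; exact hZ i j hij)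
  · rintro ⟨C⟩
    refine ⟨fun i => if C i = 0 then 2 else 3, fun i => ?_, fun i j hij => ?_⟩
    · have key : ∀ a : Fin 2, pauliSign (if a = 0 then 2 else 3) 1 = -1 := by decide
      exact key _
    · rw [prod_pauliSign_pair _ hij.ne]
      have key : ∀ a b : Fin 2, a ≠ b →
          pauliSign (if a = 0 then 2 else 3) 3 * pauliSign (if b = 0 then 2 else 3) 3 = -1 := by
        decide
      exact key _ _ (C.valid hij)
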